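/- There exists a symmetric bilinear map (·,·)* : Dom(ρ) × Dom(ρ) → ℝ such that (J,J)* = Q*(J) ≥ 0 for every J ∈ Dom(ρ), and ⟨J₁, E⟩ = (J₁, J₂)* for all J₁, J₂ ∈ Dom(ρ) and every E ∈ ρ(J₂). It is given by the polarization formula (J₁,J₂)* = ¼ (Q*(J₁+J₂) − Q*(J₁−J₂)). -/

import Mathlib

open MeasureTheory

/-- `S₀`: the closed subspace of real Schwartz functions with zero mean
(the AC-condition `∫ E = 0`). -/
noncomputable def S0 : Submodule ℝ (SchwartzMap ℝ ℝ) where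
  carrier := {E | ∫ s, E s = 0}
  zero_mem' := by simp
  add_mem' := by
    intro f g hf hg
    simp only [Set.mem_setOf_eq] at *
    have h : ∀ s : ℝ, (↑(f + g) : ℝ → ℝ) s = f s + g s := fun s => rfl
    rw [show (↑(f + g) : ℝ → ℝ) = fun s => f s + g s from funext h,
      integral_add f.integrable g.integrable, hf, hg, add_zero]
  smul_mem' := by
    intro c f hf
    simp only [Set.mem_setOf_eq] at *
    have h : (↑(c • f) : ℝ → ℝ) = fun s => c • f s := rfl
    rw [h, integral_smul, hf, smul_zero]

/-- `S₀*`: the topological dual of `S₀` (continuous real-linear functionals). -/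
abbrev S0d := ↥S0 →L[ℝ] ℝ

/-- Fourier transform `Ê(ν) = ∫ e^{−iνs} E(s) ds` of a Schwartz function. -/
noncomputable def fhat (E : SchwartzMap ℝ ℝ) (ν : ℝ) : ℂ :=
  ∫ s : ℝ, Complex.exp (-(Complex.I * ν * s)) * (E s : ℂ)

/-- `B(E,E′) := ½ ∫ Re(Ê(ν)·conj(Ê′(ν))) m(dν)`. -/
noncomputable def Bform (m : Measure ℝ) (E E' : SchwartzMap ℝ ℝ) : ℝ :=
  (1/2) * ∫ ν, (fhat E ν * (starRingEnd ℂ) (fhat E' ν)).re ∂m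

/-- `Q(E) := B(E,E) = ½ ∫ |Ê(ν)|² m(dν)`. -/
noncomputable def Qform (m : Measure ℝ) (E : ↥S0) : ℝ := Bform m E E

/-- The subdifferential `∂Q(E) ⊆ S₀*`. -/
def subQ (m : Measure ℝ) (E : ↥S0) : Set S0d :=
  {J | ∀ E' : ↥S0, Qform m E' ≥ Qform m E + J (E' - E)}

/-- The Legendre–Fenchel transform `Q*(J) := sup_{E∈S₀} (2⟨J,E⟩ − Q(E))`, with values
in `[−∞,∞]` (in fact in `[0,∞]`). -/
noncomputable def Qstar (m : Measure ℝ) (J : S0d) : EReal :=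
  ⨆ E : ↥S0, ((2 * J E - Qform m E : ℝ) : EReal)

/-- The subdifferential `∂Q*(J) ⊆ S₀`, with inequalities read in `[−∞,∞]`. -/
def subQstar (m : Measure ℝ) (J : S0d) : Set ↥S0 :=
  {E | ∀ J' : S0d, Qstar m J' ≥ Qstar m J + ((J' E - J E : ℝ) : EReal)}

/-- The AC-conductivity `σ(E) := ½ ∂Q(E)`. -/
def sigmaMap (m : Measure ℝ) (E : ↥S0) : Set S0d := {J | (2:ℝ) • J ∈ subQ m E}

/-- The AC-resistivity `ρ(J) := ½ ∂Q*(J)`. -/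
def rhoMap (m : Measure ℝ) (J : S0d) : Set ↥S0 := {E | (2:ℝ) • E ∈ subQstar m J}

/-- `Dom(ρ) := {J ∈ S₀* : ∂Q*(J) ≠ ∅}`. -/
def DomRho (m : Measure ℝ) : Set S0d := {J | (subQstar m J).Nonempty}

/-! Testing the subgradient inequality for `2E ∈ ∂Q*(J)` against `J' = B(E, ·)`, where `Q*` takes
the value `Q(E)`, shows that `E` attains the supremum defining `Q*(J)`. The first-order condition at
this maximizer is `J = B(E, ·)`. Thus every element of `Dom(ρ)` is represented by `B`, and the
polarization of `Q*` at `B(E₁, ·)` and `B(E₂, ·)` is `B(E₁, E₂)`. The argument needs only a positive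
semidefinite form whose functionals `B(E, ·)` are continuous. The frequency form has this
property because `E ↦ Ê` is continuous from `S₀` into `L²(m)`. -/

section PositiveForm

variable {V : Type*} [AddCommGroup V] [Module ℝ V] [TopologicalSpace V]

/-- The Legendre–Fenchel transform of the quadratic form `E ↦ B E E`, in the normalization
`sup_E (2⟨J, E⟩ − B E E)`. Taking `B` with values in the continuous dual encodes continuity of
the form in its second variable. -/
noncomputable def conjugateForm (B : V →ₗ[ℝ] V →L[ℝ] ℝ) (J : V →L[ℝ] ℝ) : EReal :=
  ⨆ E : V, ((2 * J E - B E E : ℝ) : EReal)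

/-- The part in the predual `V` of the subdifferential at `J` of an extended-real function `f`
on the dual. -/
def predualSubdifferential (f : (V →L[ℝ] ℝ) → EReal) (J : V →L[ℝ] ℝ) : Set V :=
  {E | ∀ J' : V →L[ℝ] ℝ, f J' ≥ f J + ((J' E - J E : ℝ) : EReal)}

/-- The resistivity `½ ∂B*(J) ⊆ V` of the form `B`, where `B* = conjugateForm B`. -/
def resistivity (B : V →ₗ[ℝ] V →L[ℝ] ℝ) (J : V →L[ℝ] ℝ) : Set V :=
  {E | (2 : ℝ) • E ∈ predualSubdifferential (conjugateForm B) J}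

/-- The functionals at which the resistivity of `B` is defined, i.e. `∂B*(J) ≠ ∅`. -/
def resistivityDomain (B : V →ₗ[ℝ] V →L[ℝ] ℝ) : Set (V →L[ℝ] ℝ) :=
  {J | (predualSubdifferential (conjugateForm B) J).Nonempty}

/-- The polarization `¼ (B*(J₁ + J₂) − B*(J₁ − J₂))` of the transform `B*` of a form `B`.
It is meaningful only where both values of `B*` are finite, since `EReal.toReal ⊤ = 0`. -/
noncomputable def conjugatePolarization (B : V →ₗ[ℝ] V →L[ℝ] ℝ) (J₁ J₂ : V →L[ℝ] ℝ) : ℝ :=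
  1 / 4 * ((conjugateForm B (J₁ + J₂)).toReal - (conjugateForm B (J₁ - J₂)).toReal)

variable {B : V →ₗ[ℝ] V →L[ℝ] ℝ}

lemma le_conjugateForm (J : V →L[ℝ] ℝ) (E : V) :
    ((2 * J E - B E E : ℝ) : EReal) ≤ conjugateForm B J :=
  le_iSup (fun E : V ↦ ((2 * J E - B E E : ℝ) : EReal)) E

lemma two_mul_apply_sub_apply_self_le (hsymm : ∀ E F, B E F = B F E)
    (hnonneg : ∀ E, 0 ≤ B E E) (E F : V) : 2 * B E F - B F F ≤ B E E := by
  have h : 0 ≤ B (E - F) (E - F) := hnonneg _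
  simp only [map_sub, sub_apply, hsymm F E] at h
  linarith

lemma conjugateForm_apply (hsymm : ∀ E F, B E F = B F E) (hnonneg : ∀ E, 0 ≤ B E E) (E : V) :
    conjugateForm B (B E) = (B E E : ℝ) := by
  refine le_antisymm (iSup_le fun F ↦ ?_) ?_
  · exact EReal.coe_le_coe (two_mul_apply_sub_apply_self_le hsymm hnonneg E F)
  · convert le_conjugateForm (B := B) (B E) E using 2
    ring

lemma conjugateForm_le_of_mem_resistivity (hsymm : ∀ E F, B E F = B F E)
    (hnonneg : ∀ E, 0 ≤ B E E) {J : V →L[ℝ] ℝ} {E : V} (hE : E ∈ resistivity B J) :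
    conjugateForm B J ≤ (2 * J E - B E E : ℝ) := by
  have h : conjugateForm B J + ((B E ((2 : ℝ) • E) - J ((2 : ℝ) • E) : ℝ) : EReal) ≤
      (B E E : ℝ) := (hE (B E)).trans_eq (conjugateForm_apply hsymm hnonneg E)
  simp only [map_smul, smul_eq_mul] at h
  refine (EReal.le_sub_iff_add_le (.inl (EReal.coe_ne_bot _)) (.inl (EReal.coe_ne_top _))).2 h
    |>.trans_eq ?_
  rw [← EReal.coe_sub]
  congr 1
  ring

lemma apply_eq_of_forall_le (hsymm : ∀ E F, B E F = B F E) {J : V →L[ℝ] ℝ} {E : V}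
    (hmax : ∀ F, 2 * J F - B F F ≤ 2 * J E - B E E) : B E = J := by
  ext F
  have hvar (t : ℝ) : 0 ≤ B F F * (t * t) + 2 * (B E F - J F) * t + 0 := by
    have h := hmax (E + t • F)
    simp only [map_add, map_smul, add_apply, smul_apply, smul_eq_mul, hsymm F E] at h
    linarith
  have hdiscr : (2 * (B E F - J F)) ^ 2 ≤ 0 := by
    simpa only [discrim, mul_zero, sub_zero] using discrim_le_zero hvar
  have hzero := pow_eq_zero_iff two_ne_zero |>.1 (hdiscr.antisymm (sq_nonneg _))
  linarith

lemma apply_eq_of_mem_resistivity (hsymm : ∀ E F, B E F = B F E) (hnonneg : ∀ E, 0 ≤ B E E)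
    {J : V →L[ℝ] ℝ} {E : V} (hE : E ∈ resistivity B J) : B E = J :=
  apply_eq_of_forall_le hsymm fun F ↦ EReal.coe_le_coe_iff.1 <|
    (le_conjugateForm J F).trans (conjugateForm_le_of_mem_resistivity hsymm hnonneg hE)

lemma exists_apply_eq_of_mem_resistivityDomain (hsymm : ∀ E F, B E F = B F E)
    (hnonneg : ∀ E, 0 ≤ B E E) {J : V →L[ℝ] ℝ} (hJ : J ∈ resistivityDomain B) : ∃ E, B E = J := by
  obtain ⟨E, hE⟩ := hJ
  refine ⟨(2 : ℝ)⁻¹ • E, apply_eq_of_mem_resistivity hsymm hnonneg ?_⟩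
  rwa [resistivity, Set.mem_ofPred_eq, smul_inv_smul₀ two_ne_zero]

lemma conjugatePolarization_apply (hsymm : ∀ E F, B E F = B F E) (hnonneg : ∀ E, 0 ≤ B E E)
    (E₁ E₂ : V) : conjugatePolarization B (B E₁) (B E₂) = B E₁ E₂ := by
  simp only [conjugatePolarization, ← map_add, ← map_sub, conjugateForm_apply hsymm hnonneg,
    EReal.toReal_coe]
  simp only [map_add, map_sub, add_apply, sub_apply, hsymm E₂ E₁]
  ring

lemma coe_conjugatePolarization (hsymm : ∀ E F, B E F = B F E) (hnonneg : ∀ E, 0 ≤ B E E)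
    (E₁ E₂ : V) : (conjugatePolarization B (B E₁) (B E₂) : EReal) =
      ((1 / 4 : ℝ) : EReal) *
        (conjugateForm B (B E₁ + B E₂) - conjugateForm B (B E₁ - B E₂)) := by
  simp only [conjugatePolarization, ← map_add, ← map_sub, conjugateForm_apply hsymm hnonneg,
    EReal.toReal_coe, EReal.coe_mul, EReal.coe_sub]

theorem statement10_general (hsymm : ∀ E F, B E F = B F E) (hnonneg : ∀ E, 0 ≤ B E E) :
    ∃ f : (V →L[ℝ] ℝ) → (V →L[ℝ] ℝ) → ℝ,
      (∀ J₁ ∈ resistivityDomain B, ∀ J₂ ∈ resistivityDomain B, f J₁ J₂ = f J₂ J₁) ∧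
      (∀ J₁ ∈ resistivityDomain B, ∀ J₂ ∈ resistivityDomain B, ∀ J₃ ∈ resistivityDomain B,
        f (J₁ + J₂) J₃ = f J₁ J₃ + f J₂ J₃) ∧
      (∀ c : ℝ, ∀ J₁ ∈ resistivityDomain B, ∀ J₂ ∈ resistivityDomain B,
        f (c • J₁) J₂ = c * f J₁ J₂) ∧
      (∀ J ∈ resistivityDomain B, 0 ≤ f J J ∧ (f J J : EReal) = conjugateForm B J) ∧
      (∀ J₁ ∈ resistivityDomain B, ∀ J₂ ∈ resistivityDomain B, ∀ E ∈ resistivity B J₂,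
        J₁ E = f J₁ J₂) ∧
      (∀ J₁ ∈ resistivityDomain B, ∀ J₂ ∈ resistivityDomain B,
        (f J₁ J₂ : EReal) =
          ((1 / 4 : ℝ) : EReal) * (conjugateForm B (J₁ + J₂) - conjugateForm B (J₁ - J₂))) := by
  have hrange {J} (hJ : J ∈ resistivityDomain B) : ∃ E, B E = J :=
    exists_apply_eq_of_mem_resistivityDomain hsymm hnonneg hJ
  have hpol := conjugatePolarization_apply hsymm hnonneg
  refine ⟨conjugatePolarization B, fun J₁ h₁ J₂ h₂ ↦ ?_, fun J₁ h₁ J₂ h₂ J₃ h₃ ↦ ?_,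
    fun c J₁ h₁ J₂ h₂ ↦ ?_, fun J hJ ↦ ?_, fun J₁ h₁ J₂ _ E hE ↦ ?_, fun J₁ h₁ J₂ h₂ ↦ ?_⟩
  · obtain ⟨⟨E₁, rfl⟩, ⟨E₂, rfl⟩⟩ := hrange h₁, hrange h₂
    rw [hpol, hpol, hsymm]
  · obtain ⟨⟨E₁, rfl⟩, ⟨E₂, rfl⟩, ⟨E₃, rfl⟩⟩ := hrange h₁, hrange h₂, hrange h₃
    rw [← map_add, hpol, hpol, hpol, map_add, add_apply]
  · obtain ⟨⟨E₁, rfl⟩, ⟨E₂, rfl⟩⟩ := hrange h₁, hrange h₂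
    rw [← map_smul, hpol, hpol, map_smul, smul_apply, smul_eq_mul]
  · obtain ⟨E, rfl⟩ := hrange hJ
    rw [hpol, conjugateForm_apply hsymm hnonneg]
    exact ⟨hnonneg E, rfl⟩
  · obtain ⟨E₁, rfl⟩ := hrange h₁
    rw [← apply_eq_of_mem_resistivity hsymm hnonneg hE, hpol]
  · obtain ⟨⟨E₁, rfl⟩, ⟨E₂, rfl⟩⟩ := hrange h₁, hrange h₂
    exact coe_conjugatePolarization hsymm hnonneg E₁ E₂

end PositiveForm

section SpectralForm

open Complex FourierTransform SchwartzMap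

/-- The transform `fhat` as a continuous linear map between Schwartz spaces: Mathlib's `𝓕` has
kernel `exp (-2πiνs)`, hence the dilation by `(2π)⁻¹`. -/
noncomputable def fhatCLM : 𝓢(ℝ, ℝ) →L[ℝ] 𝓢(ℝ, ℂ) :=
  compCLMOfContinuousLinearEquiv ℝ
      (ContinuousLinearEquiv.unitsEquivAut ℝ (Units.mk0 (2 * Real.pi)⁻¹ (by positivity))) ∘L
    fourierCLM ℝ 𝓢(ℝ, ℂ) ∘L postcompCLM ofRealCLM

lemma fhatCLM_apply (E : 𝓢(ℝ, ℝ)) (ν : ℝ) : fhatCLM E ν = fhat E ν := by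
  have h : fhatCLM E ν = 𝓕 (fun s : ℝ ↦ (E s : ℂ)) (ν * (2 * Real.pi)⁻¹) := rfl
  rw [h, Real.fourier_real_eq_integral_exp_smul, fhat]
  refine integral_congr_ae (.of_forall fun s ↦ ?_)
  simp only [smul_eq_mul]
  congr 2
  push_cast
  field_simp

variable (m : Measure ℝ) [m.HasTemperateGrowth]

/-- The map `E ↦ Ê` from `S₀` to `L²(m)`. -/
noncomputable def spectralMap : S0 →L[ℝ] Lp ℂ 2 m :=
  toLpCLM ℝ ℂ 2 m ∘L fhatCLM ∘L S0.subtypeL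

lemma coeFn_spectralMap (E : S0) : spectralMap m E =ᵐ[m] fhat E := by
  filter_upwards [coeFn_toLp (fhatCLM E) 2 m] with ν hν
  exact hν.trans (fhatCLM_apply E ν)

/-- The form `B` on `S₀`, as a family of elements of `S₀*`. It is encoded as half the pullback of
the real inner product of `L²(m)` under `E ↦ Ê`, from which continuity and positivity are immediate.
-/
noncomputable def acForm : S0 →ₗ[ℝ] S0d where
  toFun E := (1 / 2 : ℝ) • (innerSL ℝ (spectralMap m E) ∘L spectralMap m)
  map_add' E F := by simp only [map_add, ContinuousLinearMap.add_comp, smul_add]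
  map_smul' c E := by simp [smul_comm c]

lemma acForm_apply (E F : S0) :
    acForm m E F = 1 / 2 * inner ℝ (spectralMap m E) (spectralMap m F) := rfl

lemma acForm_eq_Bform (E F : S0) : acForm m E F = Bform m E F := by
  rw [acForm_apply, L2.inner_def, Bform]
  congr 1
  refine integral_congr_ae ?_
  filter_upwards [coeFn_spectralMap m E, coeFn_spectralMap m F] with ν hE hF
  rw [hE, hF, real_inner_comm, Complex.inner, mul_comm]

lemma acForm_symm (E F : S0) : acForm m E F = acForm m F E := by
  rw [acForm_apply, acForm_apply, real_inner_comm]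

lemma acForm_self_nonneg (E : S0) : 0 ≤ acForm m E E :=
  mul_nonneg one_half_pos.le (real_inner_self_nonneg (x := spectralMap m E))

lemma conjugateForm_acForm : conjugateForm (acForm m) = Qstar m := by
  ext J
  simp only [conjugateForm, Qstar, Qform, acForm_eq_Bform]

lemma resistivity_acForm : resistivity (acForm m) = rhoMap m := by
  ext J E
  simp only [resistivity, conjugateForm_acForm]
  rfl

lemma resistivityDomain_acForm : resistivityDomain (acForm m) = DomRho m := by
  ext J
  simp only [resistivityDomain, conjugateForm_acForm]
  rfl

end SpectralForm

/-- There exists a symmetric bilinear map `(·,·)*` on `Dom(ρ) × Dom(ρ)` with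
`(J,J)* = Q*(J) ≥ 0` for every `J ∈ Dom(ρ)`, and `⟨J₁,E⟩ = (J₁,J₂)*` for all
`J₁, J₂ ∈ Dom(ρ)` and every `E ∈ ρ(J₂)`; it is given by the polarization formula
`(J₁,J₂)* = ¼ (Q*(J₁+J₂) − Q*(J₁−J₂))`. -/
theorem statement10 (m : Measure ℝ) [IsFiniteMeasure m] :
    ∃ f : S0d → S0d → ℝ,
      (∀ J₁ ∈ DomRho m, ∀ J₂ ∈ DomRho m, f J₁ J₂ = f J₂ J₁) ∧
      (∀ J₁ ∈ DomRho m, ∀ J₂ ∈ DomRho m, ∀ J₃ ∈ DomRho m,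
        f (J₁ + J₂) J₃ = f J₁ J₃ + f J₂ J₃) ∧
      (∀ c : ℝ, ∀ J₁ ∈ DomRho m, ∀ J₂ ∈ DomRho m, f (c • J₁) J₂ = c * f J₁ J₂) ∧
      (∀ J ∈ DomRho m, 0 ≤ f J J ∧ ((f J J : ℝ) : EReal) = Qstar m J) ∧
      (∀ J₁ ∈ DomRho m, ∀ J₂ ∈ DomRho m, ∀ E ∈ rhoMap m J₂, J₁ E = f J₁ J₂) ∧
      (∀ J₁ ∈ DomRho m, ∀ J₂ ∈ DomRho m,
        ((f J₁ J₂ : ℝ) : EReal)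
          = (((1:ℝ)/4 : ℝ) : EReal) * (Qstar m (J₁ + J₂) - Qstar m (J₁ - J₂))) := by
  simpa only [conjugateForm_acForm, resistivity_acForm, resistivityDomain_acForm] using
    statement10_general (acForm_symm m) (acForm_self_nonneg m)
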